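/- arXiv:0810.0587 — 2 statements merged into one kernel-verified Lean document; each statement's English description precedes it below -/
import Mathlib

section
/- Let X be a real Banach space such that the norm of X is Fréchet differentiable at every nonzero point and the dual norm of X* is Fréchet differentiable at every nonzero point, and let K ⊆ X be a Čebyšev set. If d_K is Gateaux differentiable at every x ∈ X \ K, then K is convex. -/
open Filter Topology

/-- A function `f : X → ℝ` is Gateaux differentiable at `x` with Gateaux derivative the
continuous linear functional `A` if for every `y`, `(f (x + t y) - f x)/t → A y` as `t → 0`. -/
def GateauxDiffAt {X : Type*} [NormedAddCommGroup X] [NormedSpace ℝ X]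
    (f : X → ℝ) (x : X) (A : X →L[ℝ] ℝ) : Prop :=
  ∀ y : X, Tendsto (fun t : ℝ => (f (x + t • y) - f x) / t) (𝓝[≠] 0) (𝓝 (A y))

/-- Ekeland's variational principle on a closed set. -/
theorem ekeland_on {E : Type*} [MetricSpace E] [CompleteSpace E] (S : Set E) (hS : IsClosed S)
    (φ : E → ℝ) (hφ : Continuous φ) (M : ℝ) (hM : ∀ y ∈ S, φ y ≤ M) (σ : ℝ) (hσ : 0 < σ)
    (x : E) (hx : x ∈ S) :
    ∃ y ∈ S, φ x + σ * dist x y ≤ φ y ∧ ∀ z ∈ S, φ y + σ * dist y z ≤ φ z → z = y := by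
  have hstep : ∀ y : S, ∃ y' : S, φ y + σ * dist (y : E) y' ≤ φ y' ∧
      ∀ z ∈ S, φ y + σ * dist (y : E) z ≤ φ z → φ z - φ y' ≤ φ y' - φ y := by
    intro y
    set T : Set ℝ := φ '' {z | z ∈ S ∧ φ y + σ * dist (y : E) z ≤ φ z} with hT
    have hyT : φ y ∈ T := ⟨y, ⟨y.2, by simp⟩, rfl⟩
    have hbdd : BddAbove T := ⟨M, by rintro _ ⟨z, hz, rfl⟩; exact hM z hz.1⟩
    have hle : φ y ≤ sSup T := le_csSup hbdd hyT
    rcases hle.eq_or_lt with h | h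
    · refine ⟨y, by simp, fun z hz hz' => ?_⟩
      have : φ z ≤ sSup T := le_csSup hbdd ⟨z, ⟨hz, hz'⟩, rfl⟩
      linarith
    · obtain ⟨_, ⟨w, hw, rfl⟩, hw'⟩ :=
        exists_lt_of_lt_csSup ⟨_, hyT⟩ (show (φ y + sSup T) / 2 < sSup T by linarith)
      refine ⟨⟨w, hw.1⟩, hw.2, fun z hz hz' => ?_⟩
      have : φ z ≤ sSup T := le_csSup hbdd ⟨z, ⟨hz, hz'⟩, rfl⟩
      simp only
      linarith
  choose F hF1 hF2 using hstep
  let u : ℕ → S := fun n => F^[n] ⟨x, hx⟩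
  have hu0 : u 0 = ⟨x, hx⟩ := rfl
  have hus : ∀ n, u (n + 1) = F (u n) := fun n => Function.iterate_succ_apply' F n _
  have hle : ∀ n k, φ (u n) + σ * dist (u n : E) (u (n + k)) ≤ φ (u (n + k)) := by
    intro n k
    induction k with
    | zero => simp
    | succ k ih =>
      have h1 := hF1 (u (n + k))
      rw [← hus] at h1
      have h2 := dist_triangle (u n : E) (u (n + k)) (u (n + k + 1))
      have h3 := mul_le_mul_of_nonneg_left h2 hσ.le
      rw [← add_assoc]
      linarith
  have hmono : Monotone fun n => φ (u n) := by
    apply monotone_nat_of_le_succ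
    intro n
    have h := hle n 1
    have : 0 ≤ σ * dist (u n : E) (u (n + 1)) := by positivity
    linarith
  have hlim : ∃ l, Tendsto (fun n => φ (u n)) atTop (𝓝 l) :=
    ⟨_, tendsto_atTop_ciSup hmono ⟨M, by rintro _ ⟨n, rfl⟩; exact hM _ (u n).2⟩⟩
  obtain ⟨l, hl⟩ := hlim
  have hcau : CauchySeq fun n => (u n : E) := by
    rw [Metric.cauchySeq_iff']
    intro ε hε
    obtain ⟨N, hN⟩ := Metric.cauchySeq_iff'.1 hl.cauchySeq (σ * ε) (by positivity)
    refine ⟨N, fun n hn => ?_⟩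
    obtain ⟨k, rfl⟩ := Nat.exists_eq_add_of_le hn
    have h1 := hle N k
    have h2 := hN (N + k) hn
    rw [Real.dist_eq] at h2
    have h3 := (abs_lt.1 h2).2
    rw [dist_comm]
    have : σ * dist (u N : E) (u (N + k)) < σ * ε := by linarith
    exact lt_of_mul_lt_mul_left this hσ.le
  obtain ⟨y, hy⟩ := cauchySeq_tendsto_of_complete hcau
  have hyS : y ∈ S := hS.mem_of_tendsto hy (Eventually.of_forall fun n => (u n).2)
  have hyl : Tendsto (fun n => φ (u n)) atTop (𝓝 (φ y)) := (hφ.tendsto y).comp hy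
  have hyn : ∀ n, φ (u n) + σ * dist (u n : E) y ≤ φ y := by
    intro n
    have h1 : Tendsto (fun m => φ (u n) + σ * dist (u n : E) (u m)) atTop
        (𝓝 (φ (u n) + σ * dist (u n : E) y)) :=
      ((tendsto_const_nhds.dist hy).const_mul σ).const_add _
    refine le_of_tendsto_of_tendsto h1 hyl ?_
    filter_upwards [eventually_ge_atTop n] with m hm
    obtain ⟨k, rfl⟩ := Nat.exists_eq_add_of_le hm
    exact hle n k
  refine ⟨y, hyS, ?_, fun z hz hyz => ?_⟩
  · have := hyn 0
    rwa [hu0] at this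
  · have h1 : ∀ n, φ z - φ (u (n + 1)) ≤ φ (u (n + 1)) - φ (u n) := by
      intro n
      have := hF2 (u n) z hz ?_
      · rwa [← hus] at this
      · have h2 := mul_le_mul_of_nonneg_left (dist_triangle (u n : E) y z) hσ.le
        have := hyn n
        linarith
    have hs := (tendsto_add_atTop_iff_nat 1).2 hyl
    have h2 := le_of_tendsto_of_tendsto' (tendsto_const_nhds.sub hs) (hs.sub hyl) h1
    have h3 : σ * dist y z ≤ 0 := by linarith
    have h4 : dist y z ≤ 0 := by
      by_contra h
      have := mul_pos hσ (not_le.1 h)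
      linarith
    exact (dist_le_zero.1 h4).symm

/-- Smulian-type lemma: dual Fréchet differentiability plus smoothness give rotundity. -/
theorem rotund_aux {X : Type*} [NormedAddCommGroup X] [NormedSpace ℝ X]
    [CompleteSpace X]
    (hX : ∀ x : X, x ≠ 0 → DifferentiableAt ℝ (fun y : X => ‖y‖) x)
    (hX' : ∀ f : X →L[ℝ] ℝ, f ≠ 0 → DifferentiableAt ℝ (fun g : X →L[ℝ] ℝ => ‖g‖) f)
    (p q : X →L[ℝ] ℝ) (hp : ‖p‖ = 1) (hq : ‖q‖ = 1) (u : ℕ → X) (hu : ∀ n, ‖u n‖ ≤ 1)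
    (hpu : Tendsto (fun n => p (u n)) atTop (𝓝 1))
    (hqu : Tendsto (fun n => q (u n)) atTop (𝓝 1)) : p = q := by
  have hp0 : p ≠ 0 := by rintro rfl; simp at hp
  have hcau : CauchySeq u := by
    rw [Metric.cauchySeq_iff]
    intro ε hε
    have hD := (hX' p hp0).hasFDerivAt
    rw [hasFDerivAt_iff_isLittleO_nhds_zero] at hD
    have hD := hD.def (show 0 < ε / 8 by positivity)
    obtain ⟨δ, hδ, hball⟩ := Metric.eventually_nhds_iff.1 hD
    set D := fderiv ℝ (fun g : X →L[ℝ] ℝ => ‖g‖) p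
    set η := δ / 2 with hη
    have hη0 : 0 < η := by positivity
    obtain ⟨N, hN⟩ := eventually_atTop.1
      (hpu.eventually (lt_mem_nhds (show 1 - ε / 8 * η < 1 by
        have : 0 < ε / 8 * η := by positivity
        linarith)))
    refine ⟨N, fun m hm n hn => ?_⟩
    obtain ⟨g, hg1, hg2⟩ := exists_dual_vector'' ℝ (u m - u n)
    have hg2' : g (u m) - g (u n) = ‖u m - u n‖ := by
      rw [← map_sub]; simpa using hg2
    have hgn : ‖η • g‖ ≤ η := by
      rw [norm_smul, Real.norm_of_nonneg hη0.le]
      nlinarith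
    have e1 := hball (y := η • g) (by rw [dist_zero_right]; linarith)
    have e2 := hball (y := -(η • g)) (by rw [dist_zero_right, norm_neg]; linarith)
    rw [Real.norm_eq_abs] at e1 e2
    have e1' := (abs_le.1 e1).2
    have e2' := (abs_le.1 e2).2
    rw [norm_neg, map_neg] at e2'
    have e3 : ε / 8 * ‖η • g‖ ≤ ε / 8 * η := by gcongr
    have a1 : (p + η • g) (u m) ≤ ‖p + η • g‖ :=
      (le_abs_self _).trans (((p + η • g).le_opNorm (u m)).trans
        (mul_le_of_le_one_right (norm_nonneg _) (hu m)))
    have a2 : (p + -(η • g)) (u n) ≤ ‖p + -(η • g)‖ :=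
      (le_abs_self _).trans (((p + -(η • g)).le_opNorm (u n)).trans
        (mul_le_of_le_one_right (norm_nonneg _) (hu n)))
    simp only [ContinuousLinearMap.add_apply, ContinuousLinearMap.neg_apply,
      ContinuousLinearMap.smul_apply, smul_eq_mul] at a1 a2
    have b1 := hN m hm
    have b2 := hN n hn
    have key : η * ‖u m - u n‖ ≤ η * (ε / 2) := by
      rw [← hg2']
      nlinarith
    rw [dist_eq_norm]
    have := le_of_mul_le_mul_left key hη0
    linarith
  obtain ⟨x, hx⟩ := cauchySeq_tendsto_of_complete hcau
  have hpx : p x = 1 := tendsto_nhds_unique ((p.continuous.tendsto x).comp hx) hpu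
  have hqx : q x = 1 := tendsto_nhds_unique ((q.continuous.tendsto x).comp hx) hqu
  have hx1 : ‖x‖ ≤ 1 := le_of_tendsto' hx.norm hu
  have hx0 : x ≠ 0 := by rintro rfl; simp at hpx
  have main : ∀ f : X →L[ℝ] ℝ, ‖f‖ = 1 → f x = 1 → fderiv ℝ (fun y : X => ‖y‖) x = f := by
    intro f hf hfx
    have hder := ((hX x hx0).hasFDerivAt).sub f.hasFDerivAt
    have hmin : IsLocalMin ((fun y : X => ‖y‖) - ⇑f) x := by
      refine Eventually.of_forall fun y => ?_
      simp only [Pi.sub_apply]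
      have := (le_abs_self _).trans (f.le_opNorm y)
      rw [hf] at this
      linarith
    exact sub_eq_zero.1 (hmin.hasFDerivAt_eq_zero hder)
  rw [← main p hp hpx, ← main q hq hqx]

theorem ball_bound {X : Type*} [NormedAddCommGroup X] [NormedSpace ℝ X]
    (f : X →L[ℝ] ℝ) (y : X) (r M : ℝ) (hr : 0 < r) (h : ∀ z ∈ Metric.ball y r, f z < M) :
    f y + r * ‖f‖ ≤ M := by
  by_contra hc
  have h1 : (M - f y) / r < ‖f‖ := by
    rw [div_lt_iff₀ hr]; linarith
  obtain ⟨x, hx, hfx⟩ := f.exists_lt_apply_of_lt_opNorm h1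
  rw [div_lt_iff₀ hr, Real.norm_eq_abs] at hfx
  have hn : ‖r • x‖ < r := by
    rw [norm_smul, Real.norm_of_nonneg hr.le]; nlinarith
  have h2 := h (y + r • x) (by simpa [Metric.mem_ball, dist_eq_norm] using hn)
  have h3 := h (y - r • x) (by simpa [Metric.mem_ball, dist_eq_norm] using hn)
  simp only [map_add, map_sub, map_smul, smul_eq_mul] at h2 h3
  rcases abs_cases (f x) with ⟨h4, _⟩ | ⟨h4, _⟩ <;> rw [h4] at hfx <;> linarith

/-- The distance function increases at almost unit rate in some direction. -/
theorem dist_step {X : Type*} [NormedAddCommGroup X] [NormedSpace ℝ X]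
    [CompleteSpace X] (K : Set X)
    (hcheb : ∀ x : X, ∃! v : X, v ∈ K ∧ ‖x - v‖ = Metric.infDist x K)
    (hdiff : ∀ x ∉ K, ∃ A : X →L[ℝ] ℝ,
      GateauxDiffAt (fun y : X => Metric.infDist y K) x A)
    (x : X) (hx : x ∉ K) (σ : ℝ) (hσ : 0 < σ) (hσ1 : σ < 1) :
    ∃ y, y ∉ K ∧ dist x y ≤ 1 ∧ Metric.infDist x K + σ ≤ Metric.infDist y K := by
  have hpos : ∀ x ∉ K, 0 < Metric.infDist x K := by
    intro x hx
    obtain ⟨v, ⟨hv, hv'⟩, -⟩ := hcheb x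
    rw [← hv', norm_pos_iff, sub_ne_zero]
    rintro rfl; exact hx hv
  have hmem : ∀ y, 0 < Metric.infDist y K → y ∉ K := by
    intro y hy hyK
    rw [Metric.infDist_zero_of_mem hyK] at hy
    exact lt_irrefl _ hy
  obtain ⟨y, hyS, hy1, hy2⟩ := ekeland_on (Metric.closedBall x 1) Metric.isClosed_closedBall
    (fun y => Metric.infDist y K) (Metric.continuous_infDist_pt K) (Metric.infDist x K + 1)
    (fun y hy => by
      have := Metric.infDist_le_infDist_add_dist (s := K) (x := y) (y := x)
      have := Metric.mem_closedBall.1 hy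
      linarith) σ hσ x (by simp)
  have hd : 0 ≤ σ * dist x y := by positivity
  have hyK : y ∉ K := hmem y (by linarith [hpos x hx])
  have hxy : dist x y ≤ 1 := by rw [dist_comm]; exact hyS
  refine ⟨y, hyK, hxy, ?_⟩
  rcases hxy.eq_or_lt with h | h
  · rw [h] at hy1; linarith
  exfalso
  obtain ⟨A, hA⟩ := hdiff y hyK
  obtain ⟨v, ⟨hv, hv'⟩, -⟩ := hcheb y
  have hr := hpos y hyK
  set r := Metric.infDist y K with hrdef
  set w := y - v with hw
  -- derivative along w is at least r
  have hAw : r ≤ A w := by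
    have h1 : Tendsto (fun t : ℝ => (Metric.infDist (y + t • w) K - r) / t) (𝓝[<] 0)
        (𝓝 (A w)) := (hA w).mono_left (nhdsWithin_mono _ fun t ht => ne_of_lt ht)
    refine ge_of_tendsto h1 ?_
    have hI : Set.Ioo (-1 : ℝ) 0 ∈ 𝓝[<] (0 : ℝ) := Ioo_mem_nhdsLT (by norm_num)
    filter_upwards [hI] with t ht
    rw [le_div_iff_of_neg ht.2]
    have h2 := Metric.infDist_le_dist_of_mem (x := y + t • w) hv
    have h3 : y + t • w - v = (1 + t) • w := by rw [hw]; module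
    rw [dist_eq_norm, h3, norm_smul, hv', Real.norm_of_nonneg (by linarith [ht.1])] at h2
    linarith
  have h1 : Tendsto (fun t : ℝ => (Metric.infDist (y + t • w) K - r) / t) (𝓝[>] 0)
        (𝓝 (A w)) := (hA w).mono_left (nhdsWithin_mono _ fun t ht => ne_of_gt ht)
  have h2 : ∀ᶠ t in 𝓝[>] (0 : ℝ), σ * r < (Metric.infDist (y + t • w) K - r) / t :=
    h1.eventually (lt_mem_nhds (by nlinarith))
  have hI : Set.Ioo (0 : ℝ) ((1 - dist x y) / r) ∈ 𝓝[>] (0 : ℝ) :=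
    Ioo_mem_nhdsGT (div_pos (by linarith) hr)
  obtain ⟨t, ht, htI⟩ := (h2.and hI).exists
  rw [lt_div_iff₀ htI.1] at ht
  have htr := (lt_div_iff₀ hr).1 htI.2
  have hdist : dist y (y + t • w) = t * r := by
    rw [dist_eq_norm, sub_add_cancel_left, norm_neg, norm_smul, hv',
      Real.norm_of_nonneg htI.1.le]
  have hz := hy2 (y + t • w) ?_ ?_
  · have : t * r = 0 := by rw [← hdist, hz, dist_self]
    have := mul_pos htI.1 hr
    linarith
  · rw [Metric.mem_closedBall, dist_comm]
    have := dist_triangle x y (y + t • w)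
    linarith
  · rw [hdist]; nlinarith

/-- Suppose the norm of the real Banach space `X` is Fréchet differentiable at every
nonzero point and the dual norm of `X*` is Fréchet differentiable at every nonzero point,
and `K ⊆ X` is a Čebyšev set. If the distance function `d_K` is Gateaux differentiable at
every `x ∉ K`, then `K` is convex. -/
theorem chebyshev_convex_of_gateaux {X : Type*} [NormedAddCommGroup X] [NormedSpace ℝ X]
    [CompleteSpace X]
    (hX : ∀ x : X, x ≠ 0 → DifferentiableAt ℝ (fun y : X => ‖y‖) x)
    (hX' : ∀ f : X →L[ℝ] ℝ, f ≠ 0 → DifferentiableAt ℝ (fun g : X →L[ℝ] ℝ => ‖g‖) f)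
    (K : Set X)
    (hcheb : ∀ x : X, ∃! v : X, v ∈ K ∧ ‖x - v‖ = Metric.infDist x K)
    (hdiff : ∀ x ∉ K, ∃ A : X →L[ℝ] ℝ,
      GateauxDiffAt (fun y : X => Metric.infDist y K) x A) :
    Convex ℝ K := by
  have hpos : ∀ x ∉ K, 0 < Metric.infDist x K := by
    intro x hx
    obtain ⟨v, ⟨hv, hv'⟩, -⟩ := hcheb x
    rw [← hv', norm_pos_iff, sub_ne_zero]
    rintro rfl; exact hx hv
  intro a ha b hb s t hs ht hst
  by_contra hc
  set c := s • a + t • b with hcdef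
  have hd0 := hpos c hc
  set e := Metric.infDist c K / 2 with he
  have he0 : 0 < e := by positivity
  -- one step of the recursion
  have hstep : ∀ (n : ℕ) (y : {y : X // y ∉ K}), ∃ y' : {y : X // y ∉ K},
      dist (y : X) y' ≤ 1 ∧
      Metric.infDist (y : X) K + 1 - e * (1 / 2) ^ (n + 1) ≤ Metric.infDist (y' : X) K := by
    intro n y
    set η := min (1 / 2) (e * (1 / 2) ^ (n + 1)) with hη
    have hη0 : 0 < η := lt_min (by norm_num) (by positivity)
    have hη1 : η ≤ 1 / 2 := min_le_left _ _
    have hη2 : η ≤ e * (1 / 2) ^ (n + 1) := min_le_right _ _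
    obtain ⟨y', h1, h2, h3⟩ := dist_step K hcheb hdiff y y.2 (1 - η) (by linarith) (by linarith)
    exact ⟨⟨y', h1⟩, h2, by simp only; linarith⟩
  choose F hF1 hF2 using hstep
  let y : ℕ → {y : X // y ∉ K} := fun n =>
    Nat.rec (motive := fun _ => {y : X // y ∉ K}) ⟨c, hc⟩ (fun n z => F n z) n
  have hy0 : (y 0 : X) = c := rfl
  have hyd : ∀ n, dist (y n : X) (y (n + 1)) ≤ 1 := fun n => hF1 n (y n)
  have hyi : ∀ n : ℕ, n + e + e * (1 / 2) ^ n ≤ Metric.infDist (y n : X) K := by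
    intro n
    induction n with
    | zero => rw [hy0]; simp only [Nat.cast_zero, pow_zero]; linarith
    | succ n ih =>
      have := hF2 n (y n)
      change _ ≤ Metric.infDist (y (n + 1) : X) K at this
      have h2 : ((1 : ℝ) / 2) ^ n = 2 * (1 / 2) ^ (n + 1) := by ring
      rw [h2] at ih
      push_cast
      linarith
  have hyc : ∀ n : ℕ, dist c (y n : X) ≤ n := by
    intro n
    induction n with
    | zero => rw [hy0]; simp
    | succ n ih =>
      have := dist_triangle c (y n : X) (y (n + 1))
      have := hyd n
      push_cast
      linarith
  let B : ℕ → Set X := fun n => Metric.ball (y n : X) (n + e)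
  have hBmono : Monotone B := by
    apply monotone_nat_of_le_succ
    intro n
    apply Metric.ball_subset_ball'
    have := hyd n
    push_cast
    linarith
  have hUo : IsOpen (⋃ n, B n) := isOpen_iUnion fun n => Metric.isOpen_ball
  have hUc : Convex ℝ (⋃ n, B n) :=
    Directed.convex_iUnion hBmono.directed_le fun n => convex_ball _ _
  have hUK : ∀ k ∈ K, k ∉ ⋃ n, B n := by
    intro k hk hkU
    obtain ⟨n, hn⟩ := Set.mem_iUnion.1 hkU
    have h1 := Metric.infDist_le_dist_of_mem (x := (y n : X)) hk
    have h2 : dist k (y n : X) < n + e := hn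
    rw [dist_comm] at h2
    have h3 := hyi n
    have : 0 < e * (1 / 2) ^ n := by positivity
    linarith
  have hsep : ∀ k ∈ K, ∃ p : X →L[ℝ] ℝ, ‖p‖ = 1 ∧ p c < p k ∧
      ∀ n : ℕ, p (y n) + (n + e) ≤ p k := by
    intro k hk
    obtain ⟨f, hf⟩ := geometric_hahn_banach_open_point hUc hUo (hUK k hk)
    have hfb : ∀ n : ℕ, f (y n) + (n + e) * ‖f‖ ≤ f k := fun n =>
      ball_bound f (y n) (n + e) (f k) (by positivity)
        fun z hz => hf z (Set.mem_iUnion.2 ⟨n, hz⟩)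
    have hfc : f c < f k := hf c (Set.mem_iUnion.2 ⟨0, by
      change dist c (y 0 : X) < _
      rw [hy0]; simpa using he0⟩)
    have hf0 : f ≠ 0 := by rintro rfl; simp at hfc
    have hfn : 0 < ‖f‖ := norm_pos_iff.2 hf0
    refine ⟨‖f‖⁻¹ • f, ?_, ?_, fun n => ?_⟩
    · rw [norm_smul, norm_inv, norm_norm, inv_mul_cancel₀ hfn.ne']
    · simp only [ContinuousLinearMap.smul_apply, smul_eq_mul]
      gcongr
    · have := mul_le_mul_of_nonneg_left (hfb n) (inv_nonneg.2 hfn.le)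
      simp only [ContinuousLinearMap.smul_apply, smul_eq_mul]
      have h2 : ‖f‖⁻¹ * (f (y n) + (n + e) * ‖f‖) = ‖f‖⁻¹ * f (y n) + (n + e) := by
        field_simp
      linarith
  obtain ⟨p, hp, hpc, hpn⟩ := hsep a ha
  obtain ⟨q, hq, hqc, hqn⟩ := hsep b hb
  let u : ℕ → X := fun n => ((n : ℝ) + 1)⁻¹ • (c - y n)
  have hu : ∀ n, ‖u n‖ ≤ 1 := by
    intro n
    have h1 := hyc n
    rw [dist_eq_norm] at h1
    have h0 : (0 : ℝ) < n + 1 := by positivity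
    change ‖((n : ℝ) + 1)⁻¹ • (c - y n)‖ ≤ 1
    rw [norm_smul, norm_inv, Real.norm_of_nonneg h0.le, inv_mul_le_iff₀ h0]
    linarith
  have hlim : ∀ (f : X →L[ℝ] ℝ) (k : X), ‖f‖ = 1 → (∀ n : ℕ, f (y n) + (n + e) ≤ f k) →
      Tendsto (fun n => f (u n)) atTop (𝓝 1) := by
    intro f k hf hfk
    have h1 : Tendsto (fun n : ℕ => 1 - (1 + f k - f c) * (1 / ((n : ℝ) + 1))) atTop (𝓝 1) := by
      simpa using (tendsto_one_div_add_atTop_nhds_zero_nat (𝕜 := ℝ)).const_mul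
        (1 + f k - f c) |>.const_sub 1
    refine tendsto_of_tendsto_of_tendsto_of_le_of_le h1 tendsto_const_nhds ?_ ?_
    · intro n
      have h0 : (0 : ℝ) < n + 1 := by positivity
      change _ ≤ f (((n : ℝ) + 1)⁻¹ • (c - y n))
      rw [map_smul, map_sub, smul_eq_mul, le_inv_mul_iff₀ h0]
      have h2 : ((n : ℝ) + 1) * (1 - (1 + f k - f c) * (1 / ((n : ℝ) + 1)))
          = n + 1 - (1 + f k - f c) := by field_simp
      simp only
      rw [h2]
      have := hfk n
      linarith
    · intro n
      have := (le_abs_self _).trans (f.le_opNorm (u n))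
      rw [hf] at this
      simp only
      linarith [hu n]
  have hpq : p = q := rotund_aux hX hX' p q hp hq u hu (hlim p a hp hpn) (hlim q b hq hqn)
  rw [← hpq] at hqc
  have hcc : p c = s * p a + t * p b := by simp [hcdef]
  have h1 : 0 ≤ s * (p a - p c) := mul_nonneg hs (by linarith)
  have h2 : 0 ≤ t * (p b - p c) := mul_nonneg ht (by linarith)
  have h3 : s * (p a - p c) + t * (p b - p c) = 0 := by
    have : s * (p a - p c) + t * (p b - p c) = s * p a + t * p b - (s + t) * p c := by ring
    rw [this, hst, ← hcc]; ring
  rcases hs.eq_or_lt with h | h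
  · have ht1 : t = 1 := by linarith
    rw [← h, ht1] at h3
    linarith
  · have := mul_pos h (sub_pos.2 hpc)
    linarith
end

section
/- Let X be a real Banach space such that the norm of X is Fréchet differentiable at every nonzero point and the dual norm of X* is Fréchet differentiable at every nonzero point, and let K ⊆ X be a Čebyšev set. If for every x ∈ X \ K, with x̄ the unique nearest point to x in K, one has d_K⁻(x; x − x̄) = d_K(x), then K is convex. -/
open Filter Topology

lemma aux_zorn {X : Type*} [NormedAddCommGroup X] [NormedSpace ℝ X] [CompleteSpace X]
    (d : X → ℝ) (hd : ∀ x y, d x ≤ d y + ‖x - y‖) (hc : Continuous d) (σ : ℝ) (hσ : 0 < σ)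
    (H : ∀ x, 0 < d x → ∀ η > 0, ∃ z, z ≠ x ∧ ‖z - x‖ < η ∧ σ * ‖z - x‖ ≤ d z - d x)
    (x : X) (hx : 0 < d x) : ∃ z, ‖z - x‖ ≤ 1 ∧ d x + σ ≤ d z := by
  let S := {z : X // ‖z - x‖ ≤ 1 ∧ σ * ‖z - x‖ ≤ d z - d x}
  let r : S → S → Prop := fun a b => σ * ‖b.1 - a.1‖ ≤ d b.1 - d a.1
  haveI : Nonempty S := ⟨⟨x, by simp, by simp⟩⟩
  have rtrans : ∀ {a b c : S}, r a b → r b c → r a c := by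
    intro a b c hab hbc
    have h := norm_sub_le_norm_sub_add_norm_sub c.1 b.1 a.1
    have h2 := mul_le_mul_of_nonneg_left h hσ.le
    simp only [r] at *
    linarith
  have hchain : ∀ c : Set S, IsChain r c → c.Nonempty → ∃ ub, ∀ a ∈ c, r a ub := by
    intro c hcc hne
    have key : ∀ a ∈ c, ∀ b ∈ c, σ * ‖b.1 - a.1‖ ≤ |d b.1 - d a.1| := by
      intro a ha b hb
      by_cases hab : a = b
      · subst hab; simp
      · rcases hcc ha hb hab with h | h
        · exact le_trans h (le_abs_self _)
        · rw [norm_sub_rev, abs_sub_comm]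
          exact le_trans h (le_abs_self _)
    let D : Set ℝ := (fun a : S => d a.1) '' c
    have hDne : D.Nonempty := hne.image _
    have hDb : BddAbove D := by
      refine ⟨d x + 1, ?_⟩
      rintro _ ⟨a, -, rfl⟩
      have := hd a.1 x
      have := a.2.1
      simp only
      linarith
    obtain ⟨v, -, hv, hvm⟩ := exists_seq_tendsto_sSup hDne hDb
    choose w hw hwv using hvm
    have hcau : CauchySeq (fun n => (w n).1) := by
      rw [Metric.cauchySeq_iff]
      intro ε hε
      obtain ⟨N, hN⟩ := Metric.cauchySeq_iff.1 hv.cauchySeq (σ * ε) (by positivity)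
      refine ⟨N, fun m hm n hn => ?_⟩
      have h1 := hN m hm n hn
      rw [Real.dist_eq, ← hwv, ← hwv] at h1
      have h2 := key _ (hw n) _ (hw m)
      rw [dist_eq_norm]
      exact lt_of_mul_lt_mul_left (lt_of_le_of_lt h2 h1) hσ.le
    obtain ⟨z, hz⟩ := cauchySeq_tendsto_of_complete hcau
    have hdz : d z = sSup D := by
      refine tendsto_nhds_unique ((hc.tendsto z).comp hz) ?_
      refine hv.congr (fun n => (hwv n).symm)
    have hzS : ‖z - x‖ ≤ 1 ∧ σ * ‖z - x‖ ≤ d z - d x := by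
      have hn : Tendsto (fun n => ‖(w n).1 - x‖) atTop (𝓝 ‖z - x‖) := (hz.sub_const x).norm
      constructor
      · exact le_of_tendsto' hn (fun n => (w n).2.1)
      · exact le_of_tendsto_of_tendsto' (hn.const_mul σ)
          (((hc.tendsto z).comp hz).sub_const _) (fun n => (w n).2.2)
    refine ⟨⟨z, hzS⟩, fun a ha => ?_⟩
    have h1 : σ * ‖z - a.1‖ ≤ |d z - d a.1| :=
      le_of_tendsto_of_tendsto' ((hz.sub_const a.1).norm.const_mul σ)
          (((hc.tendsto z).comp hz).sub_const _).abs (fun n => key _ ha _ (hw n))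
    have h2 : d a.1 ≤ d z := by
      rw [hdz]; exact le_csSup hDb ⟨a, ha, rfl⟩
    rw [abs_of_nonneg (by linarith)] at h1
    exact h1
  obtain ⟨m, hm⟩ := exists_maximal_of_nonempty_chains_bounded hchain rtrans
  refine ⟨m.1, m.2.1, ?_⟩
  have hm2 := m.2.2
  by_cases hlt : ‖m.1 - x‖ < 1
  · exfalso
    have hdm : 0 < d m.1 := by
      have : 0 ≤ σ * ‖m.1 - x‖ := by positivity
      linarith
    obtain ⟨z, hzm, hz1, hz2⟩ := H m.1 hdm (1 - ‖m.1 - x‖) (by linarith)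
    have h := norm_sub_le_norm_sub_add_norm_sub z m.1 x
    have h2 := mul_le_mul_of_nonneg_left h hσ.le
    have h3 := hm ⟨z, by linarith, by linarith⟩ hz2
    simp only [r] at h3
    have hp : 0 < σ * ‖z - m.1‖ := mul_pos hσ (norm_pos_iff.2 (sub_ne_zero.2 hzm))
    rw [norm_sub_rev] at h3
    linarith
  · have : ‖m.1 - x‖ = 1 := le_antisymm m.2.1 (not_lt.1 hlt)
    rw [this] at hm2
    linarith

lemma aux_smooth {X : Type*} [NormedAddCommGroup X] [NormedSpace ℝ X]
    (u : X) (hu : DifferentiableAt ℝ (fun y : X => ‖y‖) u) (f : X →L[ℝ] ℝ) (hf : ‖f‖ ≤ 1)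
    (hfu : f u = ‖u‖) : f = fderiv ℝ (fun y : X => ‖y‖) u := by
  have h1 : HasFDerivAt (fun y : X => ‖y‖ - f y) (fderiv ℝ (fun y : X => ‖y‖) u - f) u :=
    hu.hasFDerivAt.sub f.hasFDerivAt
  have h2 : IsLocalMin (fun y : X => ‖y‖ - f y) u := by
    refine Filter.Eventually.of_forall fun y => ?_
    have : f y ≤ ‖y‖ := by
      have := f.le_of_opNorm_le hf y
      rw [one_mul] at this
      exact le_trans (le_abs_self _) this
    simp only [hfu]
    linarith
  exact (sub_eq_zero.1 (h2.hasFDerivAt_eq_zero h1)).symm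

lemma aux_smulian {X : Type*} [NormedAddCommGroup X] [NormedSpace ℝ X]
    (f : X →L[ℝ] ℝ) (hf1 : ‖f‖ ≤ 1)
    (hf : DifferentiableAt ℝ (fun g : X →L[ℝ] ℝ => ‖g‖) f)
    (u : ℕ → X) (hu : ∀ n, ‖u n‖ ≤ 1) (hfu : Tendsto (fun n => f (u n)) atTop (𝓝 1)) :
    CauchySeq u := by
  set A := fderiv ℝ (fun g : X →L[ℝ] ℝ => ‖g‖) f with hA
  rw [Metric.cauchySeq_iff]
  intro ε hε
  have h1 := (hasFDerivAt_iff_isLittleO_nhds_zero.1 hf.hasFDerivAt).def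
    (show (0:ℝ) < ε / 8 by positivity)
  obtain ⟨δ, hδ, hball⟩ := Metric.eventually_nhds_iff.1 h1
  have h2 : ∀ᶠ n in atTop, 1 - ε / 8 * (δ / 2) < f (u n) :=
    hfu.eventually (lt_mem_nhds (by have : 0 < ε / 8 * (δ / 2) := by positivity
                                    linarith))
  obtain ⟨N, hN⟩ := eventually_atTop.1 h2
  have key : ∀ n ≥ N, ∀ g : X →L[ℝ] ℝ, ‖g‖ ≤ δ / 2 → g (u n) - A g ≤ 2 * (ε / 8 * (δ / 2)) := by
    intro n hn g hg
    have h3 := hball (y := g) (by rw [dist_zero_right]; linarith)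
    have h4 := le_trans (le_abs_self _) h3
    have h5 : (f + g) (u n) ≤ ‖f + g‖ := by
      refine le_trans (le_abs_self _) (((f + g).le_opNorm (u n)).trans ?_)
      exact mul_le_of_le_one_right (norm_nonneg _) (hu n)
    have h6 := hN n hn
    have h7 : ε / 8 * ‖g‖ ≤ ε / 8 * (δ / 2) := by gcongr
    rw [ContinuousLinearMap.add_apply] at h5
    linarith
  refine ⟨N, fun m hm n hn => ?_⟩
  rw [dist_eq_norm]
  obtain ⟨g, hg, hgv⟩ := exists_dual_vector'' ℝ (u m - u n)
  have hg' : ‖(δ / 2) • g‖ ≤ δ / 2 := by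
    rw [norm_smul, Real.norm_of_nonneg (by positivity)]
    exact mul_le_of_le_one_right (by positivity) hg
  have e1 := key m hm ((δ / 2) • g) hg'
  have e2 := key n hn (-((δ / 2) • g)) (by rwa [norm_neg])
  have e3 : g (u m) - g (u n) = ‖u m - u n‖ := by rw [← map_sub]; simpa using hgv
  simp only [map_neg, ContinuousLinearMap.neg_apply, ContinuousLinearMap.smul_apply,
    smul_eq_mul] at e1 e2
  have e4 : (δ / 2) * ‖u m - u n‖ ≤ (δ / 2) * (ε / 2) := by
    rw [← e3]; linarith
  have := le_of_mul_le_mul_left e4 (by positivity)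
  linarith

lemma aux_eq {X : Type*} [NormedAddCommGroup X] [NormedSpace ℝ X] [CompleteSpace X]
    (hX : ∀ x : X, x ≠ 0 → DifferentiableAt ℝ (fun y : X => ‖y‖) x)
    (hX' : ∀ f : X →L[ℝ] ℝ, f ≠ 0 → DifferentiableAt ℝ (fun g : X →L[ℝ] ℝ => ‖g‖) f)
    (f₀ f₁ : X →L[ℝ] ℝ) (h₀ : ‖f₀‖ ≤ 1) (h₁ : ‖f₁‖ ≤ 1)
    (u : ℕ → X) (hu : ∀ n, ‖u n‖ ≤ 1) (hu₀ : Tendsto (fun n => f₀ (u n)) atTop (𝓝 1))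
    (hu₁ : Tendsto (fun n => f₁ (u n)) atTop (𝓝 1)) : f₀ = f₁ := by
  have hne : f₀ ≠ 0 := by
    rintro rfl
    simp at hu₀
  obtain ⟨z, hz⟩ := cauchySeq_tendsto_of_complete (aux_smulian f₀ h₀ (hX' f₀ hne) u hu hu₀)
  have e₀ : f₀ z = 1 := tendsto_nhds_unique ((f₀.continuous.tendsto z).comp hz) hu₀
  have e₁ : f₁ z = 1 := tendsto_nhds_unique ((f₁.continuous.tendsto z).comp hz) hu₁
  have hz1 : ‖z‖ ≤ 1 := le_of_tendsto' hz.norm hu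
  have hz2 : 1 ≤ ‖z‖ := by
    have := f₀.le_of_opNorm_le h₀ z
    rw [e₀] at this
    simpa using this
  have hz3 : ‖z‖ = 1 := le_antisymm hz1 hz2
  have hz0 : z ≠ 0 := by
    rintro rfl
    simp at hz3
  rw [aux_smooth z (hX z hz0) f₀ h₀ (by rw [e₀, hz3]),
    ← aux_smooth z (hX z hz0) f₁ h₁ (by rw [e₁, hz3])]

lemma aux_sep {X : Type*} [NormedAddCommGroup X] [NormedSpace ℝ X]
    (C : Set X) (hC : Convex ℝ C) (hCo : IsOpen C) (x : X) (hx : x ∈ C) (k : X) (hk : k ∉ C) :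
    ∃ f : X →L[ℝ] ℝ, ‖f‖ = 1 ∧ (∀ a ∈ C, f a < f k) ∧
      ∀ y r, 0 < r → Metric.ball y r ⊆ C → f y + r ≤ f k := by
  obtain ⟨g, hg⟩ := geometric_hahn_banach_open_point hC hCo hk
  have hg0 : g ≠ 0 := by
    rintro rfl
    simpa using hg x hx
  have hgp : 0 < ‖g‖ := norm_pos_iff.2 hg0
  have hf1 : ‖‖g‖⁻¹ • g‖ = 1 := by
    rw [norm_smul, norm_inv, norm_norm, inv_mul_cancel₀ hgp.ne']
  have hfk : ∀ a ∈ C, (‖g‖⁻¹ • g) a < (‖g‖⁻¹ • g) k := by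
    intro a ha
    simp only [ContinuousLinearMap.smul_apply, smul_eq_mul]
    exact mul_lt_mul_of_pos_left (hg a ha) (by positivity)
  generalize ‖g‖⁻¹ • g = f at hf1 hfk
  refine ⟨f, hf1, hfk, fun y r hr hb => ?_⟩
  by_contra! hcon
  have hlt : (f k - f y) / r < ‖f‖ := by
    rw [hf1, div_lt_one hr]; linarith
  have main : ∀ v : X, ‖v‖ < 1 → f v < (f k - f y) / r := by
    intro v hv
    have := hfk (y + r • v) (hb (by
      rw [Metric.mem_ball, dist_eq_norm, add_sub_cancel_left, norm_smul, Real.norm_of_nonneg hr.le]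
      exact mul_lt_of_lt_one_right hr hv))
    rw [lt_div_iff₀ hr]
    simp only [map_add, map_smul, smul_eq_mul] at this
    linarith
  obtain ⟨v, hv, hv2⟩ := f.exists_lt_apply_of_lt_opNorm hlt
  have m1 := main v hv
  have m2 := main (-v) (by rwa [norm_neg])
  rw [map_neg] at m2
  rw [Real.norm_eq_abs] at hv2
  rcases lt_abs.1 hv2 with h | h <;> linarith

/-- Suppose the norm of the real Banach space `X` is Fréchet differentiable at every
nonzero point and the dual norm of `X*` is Fréchet differentiable at every nonzero point,
and `K ⊆ X` is a Čebyšev set. If for every `x ∉ K`, with `x̄` the (unique) nearest point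
to `x` in `K`, one has `d_K⁻(x; x - x̄) = liminf_{t→0⁺} (d_K(x + t(x - x̄)) - d_K(x))/t
= d_K(x)`, then `K` is convex. -/
theorem chebyshev_convex_of_liminf {X : Type*} [NormedAddCommGroup X] [NormedSpace ℝ X]
    [CompleteSpace X]
    (hX : ∀ x : X, x ≠ 0 → DifferentiableAt ℝ (fun y : X => ‖y‖) x)
    (hX' : ∀ f : X →L[ℝ] ℝ, f ≠ 0 → DifferentiableAt ℝ (fun g : X →L[ℝ] ℝ => ‖g‖) f)
    (K : Set X)
    (hcheb : ∀ x : X, ∃! v : X, v ∈ K ∧ ‖x - v‖ = Metric.infDist x K)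
    (hliminf : ∀ x ∉ K, ∀ xbar ∈ K, ‖x - xbar‖ = Metric.infDist x K →
      liminf (fun t : ℝ =>
          (Metric.infDist (x + t • (x - xbar)) K - Metric.infDist x K) / t)
        (𝓝[>] 0) = Metric.infDist x K) :
    Convex ℝ K := by
  have hKne : K.Nonempty := by
    obtain ⟨v, hv, -⟩ := hcheb 0
    exact ⟨v, hv.1⟩
  have hpos : ∀ x, x ∉ K → 0 < Metric.infDist x K := by
    intro x hx
    rcases (Metric.infDist_nonneg (x := x) (s := K)).lt_or_eq with h | h
    · exact h
    · obtain ⟨v, hv, -⟩ := hcheb x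
      rw [← h] at hv
      have : x = v := sub_eq_zero.1 (norm_eq_zero.1 hv.2)
      exact absurd (this ▸ hv.1) hx
  have hd : ∀ x y, Metric.infDist x K ≤ Metric.infDist y K + ‖x - y‖ := by
    intro x y
    rw [← dist_eq_norm]
    exact Metric.infDist_le_infDist_add_dist
  have H : ∀ σ : ℝ, σ < 1 → ∀ x, 0 < Metric.infDist x K → ∀ η > 0, ∃ z, z ≠ x ∧ ‖z - x‖ < η ∧
      σ * ‖z - x‖ ≤ Metric.infDist z K - Metric.infDist x K := by
    intro σ hσ x hx η hη
    have hxK : x ∉ K := fun h => by rw [Metric.infDist_zero_of_mem h] at hx; exact lt_irrefl _ hx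
    obtain ⟨v, hv, -⟩ := hcheb x
    have hl := hliminf x hxK v hv.1 hv.2
    have hn : 0 < ‖x - v‖ := by rw [hv.2]; exact hx
    have hbdd : IsBoundedUnder (· ≥ ·) (𝓝[>] (0:ℝ)) (fun t : ℝ =>
          (Metric.infDist (x + t • (x - v)) K - Metric.infDist x K) / t) := by
      refine ⟨-‖x - v‖, ?_⟩
      rw [eventually_map]
      filter_upwards [self_mem_nhdsWithin] with t ht
      have ht : 0 < t := ht
      have := hd x (x + t • (x - v))
      rw [sub_add_cancel_left, norm_neg, norm_smul, Real.norm_of_nonneg ht.le] at this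
      rw [ge_iff_le, le_div_iff₀ ht]
      linarith
    have hev := eventually_lt_of_lt_liminf (b := σ * ‖x - v‖) (by
      rw [hl, ← hv.2]
      exact mul_lt_of_lt_one_left hn hσ) hbdd
    have hsmall : ∀ᶠ t : ℝ in 𝓝[>] 0, t < η / ‖x - v‖ :=
      (gt_mem_nhds (by positivity : 0 < η / ‖x - v‖)).filter_mono nhdsWithin_le_nhds
    obtain ⟨t, ht1, ht2, ht3⟩ := (hev.and (hsmall.and self_mem_nhdsWithin)).exists
    have ht : 0 < t := ht3
    have hnorm : ‖x + t • (x - v) - x‖ = t * ‖x - v‖ := by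
      rw [add_sub_cancel_left, norm_smul, Real.norm_of_nonneg ht.le]
    refine ⟨x + t • (x - v), ?_, ?_, ?_⟩
    · intro h
      rw [h, sub_self, norm_zero] at hnorm
      exact absurd hnorm (mul_pos ht hn).ne
    · rw [hnorm]
      exact (lt_div_iff₀ hn).1 ht2
    · rw [hnorm]
      rw [lt_div_iff₀ ht] at ht1
      linarith
  intro k₀ hk₀ k₁ hk₁ a b ha hb hab
  by_contra hx
  set x := a • k₀ + b • k₁ with hxdef
  have hdx := hpos x hx
  set D := Metric.infDist x K with hD
  have hstep : ∀ ε : ℝ, 0 < ε → ∀ p : X, 0 < Metric.infDist p K →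
      ∃ z, ‖z - p‖ ≤ 1 ∧ Metric.infDist p K + 1 - ε ≤ Metric.infDist z K := by
    intro ε hε p hp
    obtain ⟨z, hz1, hz2⟩ := aux_zorn (fun p => Metric.infDist p K) hd
      (Metric.continuous_infDist_pt K) (max (1 - ε) (1/2)) (by positivity)
      (H _ (by rw [max_lt_iff]; constructor <;> linarith)) p hp
    have := le_max_left (1 - ε) (1/2)
    exact ⟨z, hz1, by linarith⟩
  have hex : ∃ y : ℕ → X, y 0 = x ∧ ∀ n, ‖y (n+1) - y n‖ ≤ 1 ∧
      D / 2 + n + (D / 2) * (1/2)^n ≤ Metric.infDist (y n) K := by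
    have hstep' : ∀ n : ℕ, ∀ p : X, ∃ z, 0 < Metric.infDist p K → ‖z - p‖ ≤ 1 ∧
        Metric.infDist p K + 1 - (D / 2) * (1/2)^(n+1) ≤ Metric.infDist z K := by
      intro n p
      by_cases hp : 0 < Metric.infDist p K
      · obtain ⟨z, hz⟩ := hstep ((D / 2) * (1/2)^(n+1)) (by positivity) p hp
        exact ⟨z, fun _ => hz⟩
      · exact ⟨p, fun h => absurd h hp⟩
    choose F hF using hstep'
    let y : ℕ → X := fun n => Nat.rec x F n
    have hy : ∀ n, D / 2 + n + (D / 2) * (1/2)^n ≤ Metric.infDist (y n) K := by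
      intro n
      induction n with
      | zero => simp [y, ← hD]
      | succ n ih =>
        have := (hF n (y n) (lt_of_lt_of_le (by positivity) ih)).2
        change _ ≤ Metric.infDist (F n (y n)) K
        rw [pow_succ] at *
        push_cast
        linarith
    exact ⟨y, rfl, fun n => ⟨(hF n (y n) (lt_of_lt_of_le (by positivity) (hy n))).1, hy n⟩⟩
  obtain ⟨y, hy0, hy⟩ := hex
  let r : ℕ → ℝ := fun n => D / 2 + n
  have hr : ∀ n, 0 < r n := fun n => by positivity
  let B : ℕ → Set X := fun n => Metric.ball (y n) (r n)
  have hmono : Monotone B := by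
    refine monotone_nat_of_le_succ fun n => ?_
    refine Metric.ball_subset_ball' ?_
    rw [dist_comm, dist_eq_norm]
    have := (hy n).1
    simp only [r]
    push_cast
    linarith
  let C : Set X := ⋃ n, B n
  have hCo : IsOpen C := isOpen_iUnion fun n => Metric.isOpen_ball
  have hCc : Convex ℝ C := hmono.directed_le.convex_iUnion fun {n} => convex_ball _ _
  have hxB : x ∈ B 0 := by
    simp only [B, hy0]
    exact Metric.mem_ball_self (hr 0)
  have hxC : x ∈ C := Set.mem_iUnion.2 ⟨0, hxB⟩
  have hKC : ∀ k ∈ K, k ∉ C := by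
    intro k hk hkC
    obtain ⟨n, hn⟩ := Set.mem_iUnion.1 hkC
    have h1 : dist k (y n) < r n := hn
    have h2 := Metric.infDist_le_dist_of_mem (x := y n) hk
    have h3 := (hy n).2
    have h4 : 0 < (D / 2) * (1/2 : ℝ)^n := by positivity
    rw [dist_comm] at h1
    simp only [r] at h1
    linarith
  obtain ⟨f₀, hf₀, hfC₀, hfb₀⟩ := aux_sep C hCc hCo x hxC k₀ (hKC _ hk₀)
  obtain ⟨f₁, hf₁, hfC₁, hfb₁⟩ := aux_sep C hCc hCo x hxC k₁ (hKC _ hk₁)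
  let u : ℕ → X := fun n => (r n)⁻¹ • (x - y n)
  have hu : ∀ n, ‖u n‖ ≤ 1 := by
    intro n
    have h1 : dist x (y n) < r n := hmono (Nat.zero_le n) hxB
    rw [dist_eq_norm] at h1
    simp only [u]
    rw [norm_smul, norm_inv, Real.norm_of_nonneg (hr n).le, inv_mul_le_iff₀ (hr n)]
    linarith
  have hrt : Tendsto r atTop atTop :=
    tendsto_atTop_add_const_left _ _ tendsto_natCast_atTop_atTop
  have hlim : ∀ (f : X →L[ℝ] ℝ) (k : X), ‖f‖ = 1 →
      (∀ y r, 0 < r → Metric.ball y r ⊆ C → f y + r ≤ f k) →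
      Tendsto (fun n => f (u n)) atTop (𝓝 1) := by
    intro f k hf hfb
    have hlow : Tendsto (fun n => 1 - (f k - f x) * (r n)⁻¹) atTop (𝓝 1) := by
      simpa using (hrt.inv_tendsto_atTop.const_mul (f k - f x)).const_sub 1
    refine tendsto_of_tendsto_of_tendsto_of_le_of_le hlow tendsto_const_nhds ?_ ?_
    · intro n
      have h1 := hfb (y n) (r n) (hr n) (Set.subset_iUnion B n)
      simp only [u, map_smul, map_sub, smul_eq_mul]
      have h2 : (r n)⁻¹ * r n = 1 := inv_mul_cancel₀ (hr n).ne'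
      have h3 := mul_le_mul_of_nonneg_left h1 (inv_pos.2 (hr n)).le
      linarith
    · intro n
      have := f.le_of_opNorm_le hf.le (u n)
      rw [one_mul] at this
      exact (le_abs_self _).trans (this.trans (hu n))
  have hff := aux_eq hX hX' f₀ f₁ hf₀.le hf₁.le u hu (hlim f₀ k₀ hf₀ hfb₀) (hlim f₁ k₁ hf₁ hfb₁)
  subst hff
  have g₀ := hfC₀ x hxC
  have g₁ := hfC₁ x hxC
  have hfx : f₀ x = a * f₀ k₀ + b * f₀ k₁ := by simp [hxdef]
  have hxx : f₀ x = a * f₀ x + b * f₀ x := by rw [← add_mul, hab, one_mul]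
  have ea := mul_le_mul_of_nonneg_left g₀.le ha
  have eb := mul_le_mul_of_nonneg_left g₁.le hb
  rcases ha.lt_or_eq with h | h
  · have := mul_lt_mul_of_pos_left g₀ h
    linarith
  · have hb1 : b = 1 := by linarith
    rw [← h, hb1] at hfx
    linarith
end
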